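/- arXiv:1510.02150 — 5 statements merged into one kernel-verified Lean document; each statement's English description precedes it below -/
import Mathlib

section
/- Let (x*,λ*) ∈ ℝⁿ × ℝ≥0^m be a saddle point of the Lagrangian L over ℝⁿ × ℝ≥0^m. Then for every (x,λ) ∈ ℝⁿ × ℝ≥0^m, ⟨x − x*, ∇f(x) − Σᵢ λᵢ ∇gᵢ(x)⟩ + ⟨λ − λ*, [g(x)]_λ^+⟩ ≤ 0 (i.e., the Lie derivative of V(x,λ) = ½‖x − x*‖² + ½‖λ − λ*‖² along the primal-dual dynamics is nonpositive everywhere on ℝⁿ × ℝ≥0^m). -/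
open scoped RealInnerProductSpace

theorem convex_gradient_aux {n : ℕ} {h : EuclideanSpace ℝ (Fin n) → ℝ}
    (hd : ContDiff ℝ 1 h) (hc : ConvexOn ℝ Set.univ h) (x y : EuclideanSpace ℝ (Fin n)) :
    ⟪y - x, gradient h x⟫ ≤ h y - h x := by
  have hx : HasGradientAt h (gradient h x) x :=
    ((hd.differentiable one_ne_zero) x).hasGradientAt
  have hconv : ConvexOn ℝ Set.univ (fun t : ℝ => h (AffineMap.lineMap x y t)) := by
    exact hc.comp_affineMap (AffineMap.lineMap x y : ℝ →ᵃ[ℝ] EuclideanSpace ℝ (Fin n))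
  have hder : HasDerivAt (fun t : ℝ => h (AffineMap.lineMap x y t)) ⟪y - x, gradient h x⟫ 0 := by
    have h1 : HasDerivAt (fun t : ℝ => AffineMap.lineMap x y t) (y - x) 0 :=
      AffineMap.hasDerivAt_lineMap
    have h2 := hx.hasFDerivAt
    have h3 : HasFDerivAt h (InnerProductSpace.toDual ℝ _ (gradient h x))
        (AffineMap.lineMap x y (0 : ℝ)) := by simpa using h2
    have h4 := h3.comp_hasDerivAt (0 : ℝ) h1
    rw [real_inner_comm]
    exact h4
  have := hconv.le_slope_of_hasDerivAt (Set.mem_univ 0) (Set.mem_univ 1) one_pos hder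
  simpa [slope] using this

/-- Monotonicity of the primal-dual dynamics with respect to primal-dual
optimizers: the Lie derivative of `V(x,λ) = ½‖x − x*‖² + ½‖λ − λ*‖²` along the primal-dual
dynamics is nonpositive on `ℝⁿ × ℝ≥0^m`. -/
theorem lie_derivative_nonpos (n m : ℕ)
    (f : EuclideanSpace ℝ (Fin n) → ℝ)
    (g : Fin m → EuclideanSpace ℝ (Fin n) → ℝ)
    (hf : ContDiff ℝ 1 f) (hfconc : StrictConcaveOn ℝ Set.univ f)
    (hfgrad : LocallyLipschitz (gradient f))
    (hg : ∀ i, ContDiff ℝ 1 (g i))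
    (hgconv : ∀ i, ConvexOn ℝ Set.univ (g i))
    (hggrad : ∀ i, LocallyLipschitz (gradient (g i)))
    (xs : EuclideanSpace ℝ (Fin n)) (ls : Fin m → ℝ) (hls : ∀ i, 0 ≤ ls i)
    (hsaddle1 : ∀ x, f x - ∑ i, ls i * g i x ≤ f xs - ∑ i, ls i * g i xs)
    (hsaddle2 : ∀ lam : Fin m → ℝ, (∀ i, 0 ≤ lam i) →
      f xs - ∑ i, ls i * g i xs ≤ f xs - ∑ i, lam i * g i xs)
    (x : EuclideanSpace ℝ (Fin n)) (lam : Fin m → ℝ) (hlam : ∀ i, 0 ≤ lam i) :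
    ⟪x - xs, gradient f x - ∑ i, lam i • gradient (g i) x⟫
      + ∑ i, (lam i - ls i) * (if 0 < lam i then g i x else max 0 (g i x)) ≤ 0 := by
  have hF := convex_gradient_aux hf.neg hfconc.concaveOn.neg x xs
  have hng : gradient (-f) x = - gradient f x := by
    have hx : HasGradientAt f (gradient f x) x :=
      ((hf.differentiable one_ne_zero) x).hasGradientAt
    have h2 := hx.hasFDerivAt.neg
    rw [← map_neg] at h2
    exact HasGradientAt.gradient (hasGradientAt_iff_hasFDerivAt.2 h2)
  change ⟪xs - x, gradient (-f) x⟫ ≤ -f xs - -f x at hF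
  rw [hng, inner_neg_right, ← inner_neg_left, neg_sub] at hF
  have h1 := hsaddle1 x
  have h2 := hsaddle2 lam hlam
  have h3 : ∑ i, (lam i - ls i) * (if 0 < lam i then g i x else max 0 (g i x))
      ≤ ∑ i, (lam i * g i x - ls i * g i x) := by
    refine Finset.sum_le_sum fun i _ => ?_
    split_ifs with h
    · linarith
    · have h0 : lam i = 0 := le_antisymm (not_lt.1 h) (hlam i)
      rw [h0]
      nlinarith [mul_le_mul_of_nonneg_left (le_max_right 0 (g i x)) (hls i)]
  have h4 : ∑ i, (lam i * g i x - lam i * g i xs) ≤ ∑ i, ⟪x - xs, lam i • gradient (g i) x⟫ := by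
    refine Finset.sum_le_sum fun i _ => ?_
    have := mul_le_mul_of_nonneg_left (convex_gradient_aux (hg i) (hgconv i) x xs) (hlam i)
    rw [inner_smul_right, ← neg_sub xs x, inner_neg_left]
    linarith
  rw [inner_sub_right, inner_sum]
  rw [Finset.sum_sub_distrib] at h3 h4
  linarith
end

section
/- Let K = ℝⁿ × ℝ≥0^m, let (x,λ) ∈ K, and let v = (v_x, v_λ) ∈ ℝⁿ × ℝᵐ. Then the limit Π_K((x,λ),v) = lim_{δ→0⁺} (proj_K((x,λ) + δv) − (x,λ))/δ exists, its first block of components equals v_x, and for each i ∈ {1,…,m} its second-block i-th component equals 0 if λᵢ = 0 and (v_λ)ᵢ < 0, and equals (v_λ)ᵢ otherwise. -/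
open Filter

/-- A nearest point of the orthant is the coordinatewise clamp. -/
theorem proj_orthant_coord (n m : ℕ) (y p : EuclideanSpace ℝ (Fin n ⊕ Fin m))
    (hp : ∀ j, 0 ≤ p (Sum.inr j))
    (hmin : ∀ q : EuclideanSpace ℝ (Fin n ⊕ Fin m), (∀ j, 0 ≤ q (Sum.inr j)) →
      dist y p ≤ dist y q) :
    (∀ i, p (Sum.inl i) = y (Sum.inl i)) ∧
      (∀ j, p (Sum.inr j) = max (y (Sum.inr j)) 0) := by
  let q : EuclideanSpace ℝ (Fin n ⊕ Fin m) :=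
    WithLp.toLp 2 (Sum.elim (fun i => y (Sum.inl i)) (fun j => max (y (Sum.inr j)) 0))
  have hql : ∀ i, q (Sum.inl i) = y (Sum.inl i) := fun i => rfl
  have hqr : ∀ j, q (Sum.inr j) = max (y (Sum.inr j)) 0 := fun j => rfl
  have h1 := hmin q (fun j => by rw [hqr]; exact le_max_right _ _)
  have h2 : dist y p ^ 2 ≤ dist y q ^ 2 := by gcongr
  rw [EuclideanSpace.dist_sq_eq, EuclideanSpace.dist_sq_eq] at h2
  simp only [Real.dist_eq, sq_abs] at h2
  have h3 : ∀ k, (y k - q k) ^ 2 + (p k - q k) ^ 2 ≤ (y k - p k) ^ 2 := by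
    rintro (i | j)
    · rw [hql]; nlinarith
    · rw [hqr]
      have := hp j
      rcases le_total 0 (y (Sum.inr j)) with h | h
      · rw [max_eq_left h]; nlinarith
      · rw [max_eq_right h]; nlinarith [mul_nonneg (neg_nonneg.2 h) this]
  have h4 := Finset.sum_le_sum (fun k (_ : k ∈ Finset.univ) => h3 k)
  rw [Finset.sum_add_distrib] at h4
  have h5 : ∑ k, (p k - q k) ^ 2 = 0 :=
    le_antisymm (by linarith) (Finset.sum_nonneg fun k _ => sq_nonneg _)
  have h6 : ∀ k, p k = q k := by
    intro k
    have := (Finset.sum_eq_zero_iff_of_nonneg (fun k _ => sq_nonneg (p k - q k))).1 h5 k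
      (Finset.mem_univ k)
    exact sub_eq_zero.1 (pow_eq_zero_iff two_ne_zero |>.1 this)
  exact ⟨fun i => h6 _, fun j => h6 _⟩

/-- The one-dimensional difference quotient is eventually constant. -/
theorem clamp_quotient (a b : ℝ) (ha : 0 ≤ a) :
    ∀ᶠ δ : ℝ in nhdsWithin 0 (Set.Ioi 0),
      δ⁻¹ * (max (a + δ * b) 0 - a) = if a = 0 ∧ b < 0 then 0 else b := by
  rcases ha.eq_or_lt with rfl | h
  · filter_upwards [self_mem_nhdsWithin] with δ hδ
    have hδ : 0 < δ := hδ
    by_cases hb : b < 0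
    · have : δ * b ≤ 0 := by nlinarith
      simp [hb, this]
    · have : 0 ≤ δ * b := mul_nonneg hδ.le (not_lt.1 hb)
      simp [hb, this, hδ.ne']
  · have hc : Tendsto (fun δ : ℝ => a + δ * b) (nhdsWithin 0 (Set.Ioi 0)) (nhds (a + 0 * b)) :=
      ((by fun_prop : Continuous fun δ : ℝ => a + δ * b).tendsto 0).mono_left nhdsWithin_le_nhds
    filter_upwards [self_mem_nhdsWithin, hc.eventually_const_lt (by simpa using h : 0 < a + 0 * b)]
      with δ hδ h1
    have hδ : 0 < δ := hδ
    simp [h.ne', hδ.ne', max_eq_left h1.le]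

/-- For `K = ℝⁿ × ℝ≥0^m` (the nonnegative orthant in the `λ`-coordinates),
any point `(x,λ) ∈ K` and any vector `v`, the vector projection
`Π_K((x,λ),v) = lim_{δ→0⁺} (proj_K((x,λ)+δv) − (x,λ))/δ` exists; its first block equals the
first block of `v`, and its second-block `i`-th component is `0` when `λᵢ = 0` and `(v_λ)ᵢ < 0`,
and equals `(v_λ)ᵢ` otherwise. -/
theorem vector_projection_orthant (n m : ℕ)
    (K : Set (EuclideanSpace ℝ (Fin n ⊕ Fin m)))
    (hK : K = {z : EuclideanSpace ℝ (Fin n ⊕ Fin m) | ∀ j, 0 ≤ z (Sum.inr j)})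
    (proj : EuclideanSpace ℝ (Fin n ⊕ Fin m) → EuclideanSpace ℝ (Fin n ⊕ Fin m))
    (hproj : ∀ y, proj y ∈ K ∧ ∀ q ∈ K, dist y (proj y) ≤ dist y q)
    (z v : EuclideanSpace ℝ (Fin n ⊕ Fin m)) (hz : z ∈ K) :
    ∃ w : EuclideanSpace ℝ (Fin n ⊕ Fin m),
      Tendsto (fun δ : ℝ => δ⁻¹ • (proj (z + δ • v) - z))
        (nhdsWithin 0 (Set.Ioi 0)) (nhds w) ∧
      (∀ i, w (Sum.inl i) = v (Sum.inl i)) ∧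
      (∀ j, w (Sum.inr j) =
        if z (Sum.inr j) = 0 ∧ v (Sum.inr j) < 0 then 0 else v (Sum.inr j)) := by
  subst hK
  let w : EuclideanSpace ℝ (Fin n ⊕ Fin m) :=
    WithLp.toLp 2 (Sum.elim (fun i => v (Sum.inl i)) (fun j =>
      if z (Sum.inr j) = 0 ∧ v (Sum.inr j) < 0 then 0 else v (Sum.inr j)))
  refine ⟨w, ?_, fun i => rfl, fun j => rfl⟩
  refine tendsto_const_nhds.congr' ?_
  have hall : ∀ᶠ δ : ℝ in nhdsWithin 0 (Set.Ioi 0), ∀ j : Fin m,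
      δ⁻¹ * (max (z (Sum.inr j) + δ * v (Sum.inr j)) 0 - z (Sum.inr j)) =
        if z (Sum.inr j) = 0 ∧ v (Sum.inr j) < 0 then 0 else v (Sum.inr j) :=
    eventually_all.2 fun j => clamp_quotient _ _ (hz j)
  filter_upwards [self_mem_nhdsWithin, hall] with δ hδ h
  have hδ : 0 < δ := hδ
  obtain ⟨hl, hr⟩ := proj_orthant_coord n m (z + δ • v) (proj (z + δ • v))
    (hproj _).1 (hproj _).2
  ext k
  rcases k with i | j
  · have := hl i
    simp only [PiLp.smul_apply, PiLp.sub_apply, PiLp.add_apply, smul_eq_mul] at this ⊢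
    rw [this]
    change v (Sum.inl i) = _
    field_simp
    ring
  · have := hr j
    simp only [PiLp.smul_apply, PiLp.sub_apply, PiLp.add_apply, smul_eq_mul] at this ⊢
    rw [this]
    exact (h j).symm
end

section
/- Let (x*,λ*) ∈ ℝⁿ × ℝ≥0^m be a saddle point of the Lagrangian L over ℝⁿ × ℝ≥0^m, and let (x,λ) ∈ ℝⁿ × ℝ≥0^m satisfy ⟨x − x*, ∇f(x) − Σᵢ λᵢ ∇gᵢ(x)⟩ + ⟨λ − λ*, [g(x)]_λ^+⟩ = 0. Then x = x* and λᵀg(x*) = 0. -/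
open scoped RealInnerProductSpace

theorem convex_grad_ineq {n : ℕ} (h : EuclideanSpace ℝ (Fin n) → ℝ)
    (hd : Differentiable ℝ h) (hc : ConvexOn ℝ Set.univ h)
    (x y : EuclideanSpace ℝ (Fin n)) : h x - h y ≤ ⟪x - y, gradient h x⟫ := by
  have hc' : ConvexOn ℝ Set.univ (fun t : ℝ => h (AffineMap.lineMap x y t)) := by
    exact hc.comp_affineMap (AffineMap.lineMap x y : ℝ →ᵃ[ℝ] EuclideanSpace ℝ (Fin n))
  have hder : HasDerivAt (fun t : ℝ => h (AffineMap.lineMap x y t)) (⟪gradient h x, y - x⟫) 0 := by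
    have h1 : HasFDerivAt h (InnerProductSpace.toDual ℝ _ (gradient h x))
        (AffineMap.lineMap x y (0:ℝ)) := by
      simpa using (hd x).hasGradientAt.hasFDerivAt
    have h2 : HasDerivAt (fun t : ℝ => AffineMap.lineMap x y t) (y - x) (0:ℝ) :=
      AffineMap.hasDerivAt_lineMap
    exact h1.comp_hasDerivAt (0:ℝ) h2
  have := hc'.le_slope_of_hasDerivAt (Set.mem_univ 0) (Set.mem_univ 1) one_pos hder
  simp only [slope_def_field, AffineMap.lineMap_apply_zero, AffineMap.lineMap_apply_one] at this
  have e : ⟪x - y, gradient h x⟫ = - ⟪gradient h x, y - x⟫ := by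
    rw [real_inner_comm, ← inner_neg_right, neg_sub]
  rw [e]
  rw [sub_zero, div_one] at this
  linarith

/-- if `(x*,λ*)` is a saddle point of the Lagrangian over `ℝⁿ × ℝ≥0^m` and
`(x,λ) ∈ ℝⁿ × ℝ≥0^m` makes the Lie derivative of `V` along the primal-dual dynamics vanish,
i.e. `⟨x − x*, ∇f(x) − Σᵢ λᵢ∇gᵢ(x)⟩ + ⟨λ − λ*, [g(x)]_λ⁺⟩ = 0`, then `x = x*` and
`λᵀg(x*) = 0`. -/
theorem lie_derivative_zero_characterization (n m : ℕ)
    (f : EuclideanSpace ℝ (Fin n) → ℝ)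
    (g : Fin m → EuclideanSpace ℝ (Fin n) → ℝ)
    (hf : ContDiff ℝ 1 f) (hfconc : StrictConcaveOn ℝ Set.univ f)
    (hfgrad : LocallyLipschitz (gradient f))
    (hg : ∀ i, ContDiff ℝ 1 (g i))
    (hgconv : ∀ i, ConvexOn ℝ Set.univ (g i))
    (hggrad : ∀ i, LocallyLipschitz (gradient (g i)))
    (xs : EuclideanSpace ℝ (Fin n)) (ls : Fin m → ℝ) (hls : ∀ i, 0 ≤ ls i)
    (hsaddle1 : ∀ x, f x - ∑ i, ls i * g i x ≤ f xs - ∑ i, ls i * g i xs)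
    (hsaddle2 : ∀ lam : Fin m → ℝ, (∀ i, 0 ≤ lam i) →
      f xs - ∑ i, ls i * g i xs ≤ f xs - ∑ i, lam i * g i xs)
    (x : EuclideanSpace ℝ (Fin n)) (lam : Fin m → ℝ) (hlam : ∀ i, 0 ≤ lam i)
    (hzero : ⟪x - xs, gradient f x - ∑ i, lam i • gradient (g i) x⟫
      + ∑ i, (lam i - ls i) * (if 0 < lam i then g i x else max 0 (g i x)) = 0) :
    x = xs ∧ ∑ i, lam i * g i xs = 0 := by
  have hF : ⟪x - xs, gradient f x⟫ ≤ f x - f xs := by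
    have h1 := convex_grad_ineq (fun z => - f z) (hf.differentiable one_ne_zero).neg
      hfconc.concaveOn.neg x xs
    have e : gradient (fun z => - f z) x = - gradient f x := by
      have : fderiv ℝ (fun z => - f z) x = - fderiv ℝ f x := fderiv_fun_neg
      simp [gradient, this]
    rw [e, inner_neg_right] at h1
    linarith
  have hG : ∀ i, g i x - g i xs ≤ ⟪x - xs, gradient (g i) x⟫ := fun i =>
    convex_grad_ineq (g i) ((hg i).differentiable one_ne_zero) (hgconv i) x xs
  have hterm : ∑ i, ((lam i - ls i) * (if 0 < lam i then g i x else max 0 (g i x)))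
      ≤ ∑ i, (lam i * g i x - ls i * g i x) := by
    refine Finset.sum_le_sum fun i _ => ?_
    split_ifs with h
    · linarith
    · have h0 : lam i = 0 := le_antisymm (not_lt.mp h) (hlam i)
      rw [h0]
      have := mul_le_mul_of_nonneg_left (le_max_right 0 (g i x)) (hls i)
      linarith
  have hsum : ∑ i, (lam i * g i x - lam i * g i xs)
      ≤ ∑ i, lam i * ⟪x - xs, gradient (g i) x⟫ := by
    refine Finset.sum_le_sum fun i _ => ?_
    rw [← mul_sub]
    exact mul_le_mul_of_nonneg_left (hG i) (hlam i)
  rw [inner_sub_right, inner_sum] at hzero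
  simp only [inner_smul_right] at hzero
  rw [Finset.sum_sub_distrib] at hterm hsum
  have s1 := hsaddle1 x
  have s2 := hsaddle2 lam hlam
  have z0 := hsaddle2 (fun _ => 0) (fun _ => le_rfl)
  have z2 := hsaddle2 (fun i => 2 * ls i) (fun i => by have := hls i; positivity)
  simp only [zero_mul, Finset.sum_const_zero, mul_assoc, ← Finset.mul_sum] at z0 z2
  refine ⟨?_, by linarith⟩
  by_contra hne
  have hs := hfconc.2 (Set.mem_univ x) (Set.mem_univ xs) hne
    (by norm_num : (0:ℝ) < 1/2) (by norm_num : (0:ℝ) < 1/2) (by norm_num)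
  have hm := hsaddle1 ((1/2:ℝ) • x + (1/2:ℝ) • xs)
  have hgm : ∑ i, ls i * g i ((1/2:ℝ) • x + (1/2:ℝ) • xs)
      ≤ ∑ i, (1/2 * (ls i * g i x) + 1/2 * (ls i * g i xs)) := by
    refine Finset.sum_le_sum fun i _ => ?_
    have := (hgconv i).2 (Set.mem_univ x) (Set.mem_univ xs)
      (by norm_num : (0:ℝ) ≤ 1/2) (by norm_num : (0:ℝ) ≤ 1/2) (by norm_num)
    have := mul_le_mul_of_nonneg_left this (hls i)
    simp only [smul_eq_mul] at this
    linarith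
  rw [Finset.sum_add_distrib, ← Finset.mul_sum, ← Finset.mul_sum] at hgm
  simp only [smul_eq_mul] at hs
  linarith
end

section
/- Let K₁ ∈ ℝ^{n×n} and K₂ ∈ ℝ^{m×m} be diagonal matrices with positive diagonal entries, and let (x*,λ*) ∈ ℝⁿ × ℝ≥0^m be a saddle point of the Lagrangian L over ℝⁿ × ℝ≥0^m. Define V'(x,λ) = ½(x−x*)ᵀK₁⁻¹(x−x*) + ½(λ−λ*)ᵀK₂⁻¹(λ−λ*). Then for every (x,λ) ∈ ℝⁿ × ℝ≥0^m, the Lie derivative of V' along the gain-modified primal-dual dynamics (ẋ, λ̇) = (K₁(∇f(x) − Σᵢ λᵢ ∇gᵢ(x)), K₂[g(x)]_λ^+) is nonpositive, i.e., ⟨K₁⁻¹(x−x*), K₁(∇f(x) − Σᵢ λᵢ ∇gᵢ(x))⟩ + ⟨K₂⁻¹(λ−λ*), K₂[g(x)]_λ^+⟩ ≤ 0. -/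
theorem grad_ineq_aux {n : ℕ} (φ : EuclideanSpace ℝ (Fin n) → ℝ) (hφ : ContDiff ℝ 1 φ)
    (hc : ConvexOn ℝ Set.univ φ) (x y : EuclideanSpace ℝ (Fin n)) :
    φ x - φ y ≤ inner ℝ (gradient φ x) (x - y) := by
  have hd : DifferentiableAt ℝ φ x := (hφ.differentiable (by norm_num)) x
  have hl : HasDerivAt (fun t : ℝ => AffineMap.lineMap x y t) (y - x) (0 : ℝ) :=
    AffineMap.hasDerivAt_lineMap
  have hF : HasFDerivAt φ (fderiv ℝ φ x) (AffineMap.lineMap x y (0 : ℝ)) := by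
    simpa using hd.hasFDerivAt
  have h1 := hF.comp_hasDerivAt (0 : ℝ) hl
  have hcc : ConvexOn ℝ Set.univ (φ ∘ AffineMap.lineMap (k := ℝ) x y) := by
    simpa using hc.comp_affineMap (AffineMap.lineMap (k := ℝ) x y)
  have h2 := hcc.le_slope_of_hasDerivAt (Set.mem_univ (0 : ℝ)) (Set.mem_univ (1 : ℝ))
    one_pos h1
  have h3 : inner ℝ (gradient φ x) (x - y) = fderiv ℝ φ x (x - y) := by
    simp [gradient]
  rw [h3]
  simp [slope_def_field] at h2 ⊢
  linarith

/-- for diagonal positive definite gain matrices `K₁, K₂` (with diagonal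
entries `k1 i > 0`, `k2 j > 0`) and a saddle point `(x*,λ*)` of the Lagrangian over
`ℝⁿ × ℝ≥0^m`, the Lie derivative of `V'(x,λ) = ½(x−x*)ᵀK₁⁻¹(x−x*) + ½(λ−λ*)ᵀK₂⁻¹(λ−λ*)`
along the gain-modified primal-dual dynamics
`(ẋ, λ̇) = (K₁(∇f(x) − Σᵢ λᵢ∇gᵢ(x)), K₂[g(x)]_λ⁺)` is nonpositive on `ℝⁿ × ℝ≥0^m`:
`⟨K₁⁻¹(x−x*), K₁(∇f(x) − Σᵢ λᵢ∇gᵢ(x))⟩ + ⟨K₂⁻¹(λ−λ*), K₂[g(x)]_λ⁺⟩ ≤ 0`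
(the inner products written out in coordinates). -/
theorem lie_derivative_nonpos_with_gains (n m : ℕ)
    (f : EuclideanSpace ℝ (Fin n) → ℝ)
    (g : Fin m → EuclideanSpace ℝ (Fin n) → ℝ)
    (hf : ContDiff ℝ 1 f) (hfconc : StrictConcaveOn ℝ Set.univ f)
    (hfgrad : LocallyLipschitz (gradient f))
    (hg : ∀ i, ContDiff ℝ 1 (g i))
    (hgconv : ∀ i, ConvexOn ℝ Set.univ (g i))
    (hggrad : ∀ i, LocallyLipschitz (gradient (g i)))
    (k1 : Fin n → ℝ) (k2 : Fin m → ℝ)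
    (hk1 : ∀ i, 0 < k1 i) (hk2 : ∀ j, 0 < k2 j)
    (xs : EuclideanSpace ℝ (Fin n)) (ls : Fin m → ℝ) (hls : ∀ i, 0 ≤ ls i)
    (hsaddle1 : ∀ x, f x - ∑ i, ls i * g i x ≤ f xs - ∑ i, ls i * g i xs)
    (hsaddle2 : ∀ lam : Fin m → ℝ, (∀ i, 0 ≤ lam i) →
      f xs - ∑ i, ls i * g i xs ≤ f xs - ∑ i, lam i * g i xs)
    (x : EuclideanSpace ℝ (Fin n)) (lam : Fin m → ℝ) (hlam : ∀ i, 0 ≤ lam i) :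
    (∑ i, ((k1 i)⁻¹ * (x i - xs i)) *
        (k1 i * (gradient f x - ∑ j, lam j • gradient (g j) x) i))
      + ∑ j, ((k2 j)⁻¹ * (lam j - ls j)) *
          (k2 j * (if 0 < lam j then g j x else max 0 (g j x))) ≤ 0 := by
  have hF := grad_ineq_aux (fun z => - f z) hf.neg hfconc.concaveOn.neg x xs
  have hgr : gradient (fun z => - f z) x = - gradient f x := by
    simp [gradient, fderiv_fun_neg]
  rw [hgr, inner_neg_left] at hF
  have hG := fun j => grad_ineq_aux (g j) (hg j) (hgconv j) x xs
  have e1 : (∑ i, ((k1 i)⁻¹ * (x i - xs i)) *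
        (k1 i * (gradient f x - ∑ j, lam j • gradient (g j) x) i))
      = inner ℝ (gradient f x) (x - xs) - ∑ j, lam j * inner ℝ (gradient (g j) x) (x - xs) := by
    have : inner ℝ (gradient f x) (x - xs) - ∑ j, lam j * inner ℝ (gradient (g j) x) (x - xs)
        = inner ℝ (gradient f x - ∑ j, lam j • gradient (g j) x) (x - xs) := by
      simp [inner_sub_left, sum_inner, real_inner_smul_left]
    rw [this, PiLp.inner_apply]
    refine Finset.sum_congr rfl fun i _ => ?_
    have := (hk1 i).ne'
    simp only [PiLp.sub_apply, RCLike.inner_apply, conj_trivial]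
    field_simp
  have e2 : ∑ j, lam j * (g j x - g j xs) ≤
      ∑ j, lam j * inner ℝ (gradient (g j) x) (x - xs) :=
    Finset.sum_le_sum fun j _ => mul_le_mul_of_nonneg_left (hG j) (hlam j)
  have e3 : ∑ j, ((k2 j)⁻¹ * (lam j - ls j)) *
          (k2 j * (if 0 < lam j then g j x else max 0 (g j x))) ≤
      ∑ j, (lam j - ls j) * g j x := by
    refine Finset.sum_le_sum fun j _ => ?_
    have h0 := (hk2 j).ne'
    have : ∀ c : ℝ, ((k2 j)⁻¹ * (lam j - ls j)) * (k2 j * c) = (lam j - ls j) * c := by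
      intro c
      field_simp
    rw [this]
    split_ifs with h
    · exact le_rfl
    · have h1 : lam j = 0 := le_antisymm (not_lt.mp h) (hlam j)
      rw [h1]
      nlinarith [hls j, le_max_right 0 (g j x)]
  have s1 := hsaddle1 x
  have s2 := hsaddle2 lam hlam
  rw [e1]
  refine (add_le_add le_rfl e3).trans ?_
  clear e3
  simp only [mul_sub, sub_mul, Finset.sum_sub_distrib] at e2 ⊢
  linarith
end

section
/- Let F : ℝᵈ → ℝᵈ be Lebesgue measurable and locally bounded, and let S ⊂ ℝᵈ be compact and invariant under the dynamics ẋ = F(x) (every Caratheodory solution starting in S remains in S). Assume that for each x₀ ∈ S there exists a unique Caratheodory solution on [0,∞) starting at x₀ and that its omega-limit set is invariant. Let V : ℝᵈ → ℝ be continuously differentiable with ⟨∇V(x), F(x)⟩ ≤ 0 for all x ∈ S, and let M be the union of all invariant sets contained in the closure of {x ∈ S : ⟨∇V(x), F(x)⟩ = 0}. Then every Caratheodory solution γ starting in S converges to M, i.e., dist(γ(t), M) → 0 as t → ∞. -/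
open Set Filter
open scoped RealInnerProductSpace

/-- A Caratheodory solution of `ẋ = F(x)` on `[0,∞)`: a continuous curve with
`γ(t) = γ(0) + ∫₀ᵗ F(γ(s)) ds` for all `t ≥ 0`. -/
noncomputable def IsCaraSol (d : ℕ)
    (F : EuclideanSpace ℝ (Fin d) → EuclideanSpace ℝ (Fin d))
    (γ : ℝ → EuclideanSpace ℝ (Fin d)) : Prop :=
  ContinuousOn γ (Ici 0) ∧ ∀ t ∈ Ici (0:ℝ), γ t = γ 0 + ∫ s in (0:ℝ)..t, F (γ s)

/-- A set `A` is invariant under `ẋ = F(x)` if every Caratheodory solution starting in `A`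
remains in `A`. -/
def IsInvariant' (d : ℕ)
    (F : EuclideanSpace ℝ (Fin d) → EuclideanSpace ℝ (Fin d))
    (A : Set (EuclideanSpace ℝ (Fin d))) : Prop :=
  ∀ γ : ℝ → EuclideanSpace ℝ (Fin d),
    IsCaraSol d F γ → γ 0 ∈ A → ∀ t ∈ Ici (0:ℝ), γ t ∈ A

open MeasureTheory in
theorem aux_bound (d : ℕ)
    (F : EuclideanSpace ℝ (Fin d) → EuclideanSpace ℝ (Fin d))
    (hFbdd : ∀ x : EuclideanSpace ℝ (Fin d), ∃ (M : ℝ) (ε : ℝ), 0 < ε ∧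
      ∀ y ∈ Metric.ball x ε, ‖F y‖ ≤ M)
    (S : Set (EuclideanSpace ℝ (Fin d))) (hS : IsCompact S) :
    ∃ K : ℝ, 0 ≤ K ∧ ∀ x ∈ S, ‖F x‖ ≤ K := by
  refine hS.induction_on (p := fun s => ∃ K : ℝ, 0 ≤ K ∧ ∀ x ∈ s, ‖F x‖ ≤ K) ⟨0, le_rfl, by simp⟩
    ?_ ?_ ?_
  · rintro s t hst ⟨K, h0, hK⟩
    exact ⟨K, h0, fun x hx => hK x (hst hx)⟩
  · rintro s t ⟨K, h0, hK⟩ ⟨L, h1, hL⟩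
    refine ⟨max K L, le_max_of_le_left h0, ?_⟩
    rintro x (hx | hx)
    · exact (hK x hx).trans (le_max_left _ _)
    · exact (hL x hx).trans (le_max_right _ _)
  · intro x _
    obtain ⟨M, ε, hε, h⟩ := hFbdd x
    exact ⟨Metric.ball x ε, mem_nhdsWithin_of_mem_nhds (Metric.ball_mem_nhds x hε),
      max M 0, le_max_right _ _, fun y hy => (h y hy).trans (le_max_left _ _)⟩

open MeasureTheory in
theorem aux_sol (d : ℕ)
    (F : EuclideanSpace ℝ (Fin d) → EuclideanSpace ℝ (Fin d))
    (hFmeas : Measurable F) (S : Set (EuclideanSpace ℝ (Fin d))) (K : ℝ) (hK0 : 0 ≤ K)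
    (hK : ∀ x ∈ S, ‖F x‖ ≤ K)
    (γ : ℝ → EuclideanSpace ℝ (Fin d))
    (hγ : IsCaraSol d F γ) (hγS : ∀ t ∈ Ici (0:ℝ), γ t ∈ S) :
    (∀ᵐ t : ℝ, 0 < t → HasDerivAt γ (F (γ t)) t) ∧
      LipschitzOnWith (Real.toNNReal K) γ (Ici 0) := by
  obtain ⟨hc, hi⟩ := hγ
  let η : ℝ → EuclideanSpace ℝ (Fin d) := fun t => γ (max t 0)
  have hηc : Continuous η := by
    refine hc.comp_continuous (by fun_prop) (fun t => ?_)
    simp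
  have hηeq : ∀ t : ℝ, 0 ≤ t → η t = γ t := fun t ht => by simp [η, ht]
  have hηb : ∀ t, ‖F (η t)‖ ≤ K := fun t => hK _ (hγS _ (by simp))
  have hm : Measurable (fun t => F (η t)) := hFmeas.comp hηc.measurable
  have hloc : LocallyIntegrable (fun t => F (η t)) volume := by
    refine (locallyIntegrable_const (K : ℝ)).mono hm.aestronglyMeasurable ?_
    filter_upwards with t
    rw [Real.norm_of_nonneg hK0]
    exact hηb t
  have hii : ∀ a b : ℝ, IntervalIntegrable (fun t => F (η t)) volume a b := fun a b =>
    intervalIntegrable_iff.mpr <|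
      (hloc.integrableOn_isCompact isCompact_uIcc).mono_set uIoc_subset_uIcc
  have hint : ∀ t : ℝ, 0 ≤ t → γ t = γ 0 + ∫ s in (0:ℝ)..t, F (η s) := by
    intro t ht
    rw [hi t ht]
    congr 1
    refine intervalIntegral.integral_congr (fun s hs => ?_)
    rw [uIcc_of_le ht] at hs
    simp only [hηeq s hs.1]
  constructor
  · filter_upwards [LocallyIntegrable.ae_hasDerivAt_integral hloc] with t ht ht0
    have h1 := (ht 0).const_add (γ 0)
    rw [hηeq t ht0.le] at h1
    refine h1.congr_of_eventuallyEq ?_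
    filter_upwards [lt_mem_nhds ht0] with s hs
    exact hint s hs.le
  · refine LipschitzOnWith.of_dist_le_mul (fun x hx y hy => ?_)
    rw [Real.coe_toNNReal K hK0, dist_eq_norm, hint x hx, hint y hy, add_sub_add_left_eq_sub,
      intervalIntegral.integral_interval_sub_left (hii _ _) (hii _ _), Real.dist_eq]
    exact intervalIntegral.norm_integral_le_of_norm_le_const (fun s _ => hηb s)

open MeasureTheory in
theorem aux_V (d : ℕ)
    (F : EuclideanSpace ℝ (Fin d) → EuclideanSpace ℝ (Fin d))
    (V : EuclideanSpace ℝ (Fin d) → ℝ) (hV : ContDiff ℝ 1 V)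
    (γ : ℝ → EuclideanSpace ℝ (Fin d))
    (h : ∀ᵐ t : ℝ, 0 < t → HasDerivAt γ (F (γ t)) t) :
    ∀ᵐ t : ℝ, 0 < t → HasDerivAt (fun s => V (γ s)) ⟪gradient V (γ t), F (γ t)⟫ t := by
  filter_upwards [h] with t ht ht0
  rw [inner_gradient_left]
  exact ((hV.differentiable one_ne_zero (γ t)).hasFDerivAt).comp_hasDerivAt t (ht ht0)

open MeasureTheory in
theorem aux_anti (d : ℕ)
    (F : EuclideanSpace ℝ (Fin d) → EuclideanSpace ℝ (Fin d))
    (S : Set (EuclideanSpace ℝ (Fin d))) (hS : IsCompact S)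
    (V : EuclideanSpace ℝ (Fin d) → ℝ) (hV : ContDiff ℝ 1 V)
    (hVdecr : ∀ x ∈ S, ⟪gradient V x, F x⟫ ≤ 0)
    (γ : ℝ → EuclideanSpace ℝ (Fin d)) (hγS : ∀ t ∈ Ici (0:ℝ), γ t ∈ S)
    (h : ∀ᵐ t : ℝ, 0 < t → HasDerivAt γ (F (γ t)) t) (K : NNReal)
    (hL : LipschitzOnWith K γ (Ici 0)) :
    AntitoneOn (fun t => V (γ t)) (Ici 0) := by
  intro a ha b hb hab
  obtain ⟨L, hVL⟩ := (hV.locallyLipschitz.locallyLipschitzOn (s := S)).exists_lipschitzOnWith_of_compact hS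
  have hc : LipschitzOnWith (L * K) (fun t => V (γ t)) (Ici 0) := hVL.comp hL hγS
  have hac : AbsolutelyContinuousOnInterval (fun t => V (γ t)) a b :=
    (hc.mono (by
      rw [uIcc_of_le hab]
      exact fun x hx => le_trans ha hx.1)).absolutelyContinuousOnInterval
  have heq := hac.integral_deriv_eq_sub
  have hle : ∫ x in a..b, deriv (fun t => V (γ t)) x ≤ 0 := by
    rw [intervalIntegral.integral_of_le hab]
    refine setIntegral_nonpos_of_ae_restrict ?_
    rw [EventuallyLE, ae_restrict_iff' measurableSet_Ioc]
    filter_upwards [aux_V d F V hV γ h] with t ht ht'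
    have ht0 : 0 < t := lt_of_le_of_lt ha ht'.1
    rw [(ht ht0).deriv]
    exact hVdecr _ (hγS t ht0.le)
  simp only at heq ⊢
  linarith

/-- invariance principle for discontinuous Caratheodory systems. Let
`F : ℝᵈ → ℝᵈ` be measurable and locally bounded, `S` compact and invariant, assume unique
Caratheodory solutions on `[0,∞)` from each point of `S` whose omega-limit sets are
invariant, and let `V` be `C¹` with `⟨∇V(x), F(x)⟩ ≤ 0` on `S`. If `M` is the union of all
invariant sets contained in the closure of `{x ∈ S : ⟨∇V(x), F(x)⟩ = 0}`, then every
Caratheodory solution starting in `S` converges to `M`: `dist(γ(t), M) → 0` as `t → ∞`. -/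
theorem invariance_principle (d : ℕ)
    (F : EuclideanSpace ℝ (Fin d) → EuclideanSpace ℝ (Fin d))
    (hFmeas : Measurable F)
    (hFbdd : ∀ x : EuclideanSpace ℝ (Fin d), ∃ (M : ℝ) (ε : ℝ), 0 < ε ∧
      ∀ y ∈ Metric.ball x ε, ‖F y‖ ≤ M)
    (S : Set (EuclideanSpace ℝ (Fin d)))
    (hScomp : IsCompact S) (hSinv : IsInvariant' d F S)
    (hexist : ∀ x0 ∈ S, ∃ γ : ℝ → EuclideanSpace ℝ (Fin d),
      IsCaraSol d F γ ∧ γ 0 = x0 ∧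
      (∀ γ' : ℝ → EuclideanSpace ℝ (Fin d),
        IsCaraSol d F γ' → γ' 0 = x0 → ∀ t ∈ Ici (0:ℝ), γ' t = γ t) ∧
      IsInvariant' d F {y | ∃ u : ℕ → ℝ, Tendsto u atTop atTop ∧
        Tendsto (fun k => γ (u k)) atTop (nhds y)})
    (V : EuclideanSpace ℝ (Fin d) → ℝ) (hV : ContDiff ℝ 1 V)
    (hVdecr : ∀ x ∈ S, ⟪gradient V x, F x⟫ ≤ 0)
    (M : Set (EuclideanSpace ℝ (Fin d)))
    (hM : M = ⋃₀ {A | IsInvariant' d F A ∧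
      A ⊆ closure {x ∈ S | ⟪gradient V x, F x⟫ = 0}})
    (γ : ℝ → EuclideanSpace ℝ (Fin d))
    (hγ : IsCaraSol d F γ) (hγ0 : γ 0 ∈ S) :
    Tendsto (fun t => Metric.infDist (γ t) M) atTop (nhds 0) := by
  obtain ⟨K, hK0, hK⟩ := aux_bound d F hFbdd S hScomp
  have hγS : ∀ t ∈ Ici (0:ℝ), γ t ∈ S := hSinv γ hγ hγ0
  obtain ⟨γ₁, hγ₁, h10, huniq, hΩinv⟩ := hexist (γ 0) hγ0
  have heq : ∀ t ∈ Ici (0:ℝ), γ t = γ₁ t := huniq γ hγ rfl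
  have hγ₁S : ∀ t ∈ Ici (0:ℝ), γ₁ t ∈ S := hSinv γ₁ hγ₁ (h10 ▸ hγ0)
  set Ω := {y | ∃ u : ℕ → ℝ, Tendsto u atTop atTop ∧
        Tendsto (fun k => γ₁ (u k)) atTop (nhds y)} with hΩ
  obtain ⟨hd1, hl1⟩ := aux_sol d F hFmeas S K hK0 hK γ₁ hγ₁ hγ₁S
  have hanti := aux_anti d F S hScomp V hV hVdecr γ₁ hγ₁S hd1 _ hl1
  have hΩS : Ω ⊆ S := by
    rintro y ⟨u, hu, huy⟩
    refine hScomp.isClosed.mem_of_tendsto huy ?_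
    filter_upwards [hu.eventually_ge_atTop 0] with k hk
    exact hγ₁S _ hk
  obtain ⟨c, hc⟩ : ∃ c, Tendsto (fun t => V (γ₁ t)) atTop (nhds c) := by
    have hanti' : Antitone (fun t : ℝ => V (γ₁ (max t 0))) := fun a b hab =>
      hanti (by simp) (by simp) (max_le_max_right 0 hab)
    have hbdd : BddBelow (range fun t : ℝ => V (γ₁ (max t 0))) := by
      refine (hScomp.image hV.continuous).bddBelow.mono ?_
      rintro _ ⟨t, rfl⟩
      exact ⟨_, hγ₁S _ (by simp), rfl⟩
    refine ⟨_, (tendsto_atTop_ciInf hanti' hbdd).congr' ?_⟩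
    filter_upwards [eventually_ge_atTop 0] with t ht
    rw [max_eq_left ht]
  have hVΩ : ∀ y ∈ Ω, V y = c := by
    rintro y ⟨u, hu, huy⟩
    exact tendsto_nhds_unique ((hV.continuous.tendsto y).comp huy) (hc.comp hu)
  have hΩcl : Ω ⊆ closure {x ∈ S | ⟪gradient V x, F x⟫ = 0} := by
    intro y hy
    obtain ⟨σ, hσ, hσ0, -, -⟩ := hexist y (hΩS hy)
    have hσΩ : ∀ t ∈ Ici (0:ℝ), σ t ∈ Ω := hΩinv σ hσ (hσ0 ▸ hy)
    have hσS : ∀ t ∈ Ici (0:ℝ), σ t ∈ S := fun t ht => hΩS (hσΩ t ht)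
    obtain ⟨hd2, -⟩ := aux_sol d F hFmeas S K hK0 hK σ hσ hσS
    have hz : ∀ᵐ t : ℝ, 0 < t → ⟪gradient V (σ t), F (σ t)⟫ = 0 := by
      filter_upwards [aux_V d F V hV σ hd2] with t ht ht0
      refine (ht ht0).unique ((hasDerivAt_const t c).congr_of_eventuallyEq ?_)
      filter_upwards [lt_mem_nhds ht0] with s hs
      exact hVΩ _ (hσΩ s hs.le)
    rw [Metric.mem_closure_iff]
    intro ε hε
    have hcont := Metric.continuousWithinAt_iff.1 (hσ.1 0 (by simp)) ε hε
    obtain ⟨δ, hδ, hδ'⟩ := hcont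
    obtain ⟨t, ht, htz⟩ : ∃ t ∈ Ioo (0:ℝ) δ, 0 < t → ⟪gradient V (σ t), F (σ t)⟫ = 0 := by
      by_contra hcon
      push Not at hcon
      have h0 : MeasureTheory.volume (Ioo (0:ℝ) δ) = 0 := by
        refine MeasureTheory.measure_mono_null (fun t ht => ?_) (MeasureTheory.ae_iff.1 hz)
        have := hcon t ht
        simp only [mem_setOf_eq]
        exact fun h => this.2 (h this.1)
      simp at h0
      linarith
    refine ⟨σ t, ⟨hσS t ht.1.le, htz ht.1⟩, ?_⟩
    rw [dist_comm, ← hσ0]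
    refine hδ' (x := t) ht.1.le ?_
    rw [Real.dist_eq, sub_zero, abs_of_pos ht.1]
    exact ht.2
  have hΩM : Ω ⊆ M := by
    rw [hM]
    exact fun y hy => ⟨Ω, ⟨hΩinv, hΩcl⟩, hy⟩
  by_contra hnot
  rw [Metric.tendsto_atTop] at hnot
  push Not at hnot
  obtain ⟨ε, hε, hfar⟩ := hnot
  choose u hu1 hu2 using fun n : ℕ => hfar (n : ℝ)
  have hu : Tendsto u atTop atTop := tendsto_atTop_mono hu1 tendsto_natCast_atTop_atTop
  have hun : ∀ n, u n ∈ Ici (0:ℝ) := fun n => le_trans (Nat.cast_nonneg n) (hu1 n)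
  obtain ⟨y, -, φ, hφ, hy⟩ := hScomp.tendsto_subseq (fun n => hγS (u n) (hun n))
  have hyΩ : y ∈ Ω := by
    refine ⟨u ∘ φ, hu.comp hφ.tendsto_atTop, hy.congr (fun k => ?_)⟩
    exact heq _ (hun _)
  have hlim := ((Metric.continuous_infDist_pt M).tendsto y).comp hy
  rw [Metric.infDist_zero_of_mem (hΩM hyΩ)] at hlim
  obtain ⟨N, hN⟩ := (Metric.tendsto_atTop.1 hlim) ε hε
  exact absurd (hN N le_rfl) (not_lt.2 (hu2 (φ N)))
end
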